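/- Set b₀ := (α−β)/4 + 1/8 + β·(1−√(1−k²))/(2k²) and b₁ := (1−4α²)/16. Then as n → ∞ the coefficient p1(n) of x^{n−2} in P_n satisfies lim_{n→∞} (p1(n) + n/4) = b₀ and lim_{n→∞} n·(p1(n) + n/4 − b₀) = b₁. -/

import Mathlib

open MeasureTheory

section OrthogonalPolynomials

open Polynomial

/-- `P` is the sequence of monic orthogonal polynomials, with squared norms `h`, of an even
functional `Λ` that is nonnegative on polynomials nonnegative on `[-1, 1]`. -/
structure IsSymmetricOPS (Λ : ℝ[X] →ₗ[ℝ] ℝ) (P : ℕ → ℝ[X]) (h : ℕ → ℝ) : Prop where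
  monic : ∀ n, (P n).Monic
  natDegree_eq : ∀ n, (P n).natDegree = n
  pos : ∀ n, 0 < h n
  orth : ∀ m n, Λ (P m * P n) = if m = n then h n else 0
  even : ∀ p, Λ (p.comp (-X)) = Λ p
  nonneg : ∀ p : ℝ[X], (∀ x ∈ Set.Icc (-1 : ℝ) 1, 0 ≤ p.eval x) → 0 ≤ Λ p

namespace IsSymmetricOPS

variable {Λ : ℝ[X] →ₗ[ℝ] ℝ} {P : ℕ → ℝ[X]} {h : ℕ → ℝ}

lemma coeff_self (H : IsSymmetricOPS Λ P h) (n : ℕ) : (P n).coeff n = 1 := by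
  have := H.monic n
  rwa [Monic, leadingCoeff, H.natDegree_eq] at this

lemma coeff_of_lt (H : IsSymmetricOPS Λ P h) {n m : ℕ} (hm : n < m) : (P n).coeff m = 0 :=
  coeff_eq_zero_of_natDegree_lt (by rw [H.natDegree_eq]; exact hm)

/-- Subtracting the right multiple of `P d` lowers the degree. -/
lemma degree_sub_lt (H : IsSymmetricOPS Λ P h) {d : ℕ} {R : ℝ[X]} (hR : R.degree < (d + 1 : ℕ)) :
    (R - C (R.coeff d) * P d).degree < (d : ℕ) := by
  rw [degree_lt_iff_coeff_zero] at hR ⊢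
  intro m hm
  rcases hm.eq_or_lt with rfl | hm
  · simp [H.coeff_self]
  · simp [hR m (by omega), H.coeff_of_lt hm]

lemma apply_mul_eq_zero (H : IsSymmetricOPS Λ P h) {n : ℕ} {R : ℝ[X]} (hR : R.degree < n) :
    Λ (P n * R) = 0 := by
  suffices ∀ d ≤ n, ∀ R : ℝ[X], R.degree < d → Λ (P n * R) = 0 from this n le_rfl R hR
  intro d
  induction d with
  | zero =>
    intro _ R hR
    have : R = 0 := by
      rw [← degree_eq_bot]; exact Nat.WithBot.lt_zero_iff.mp (by simpa using hR)
    simp [this]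
  | succ d ih =>
    intro hd R hR
    have h1 := ih (by omega) _ (H.degree_sub_lt hR)
    have h2 : P n * R = P n * (R - C (R.coeff d) * P d) + R.coeff d • (P n * P d) := by
      rw [smul_eq_C_mul]; ring
    rw [h2, map_add, map_smul, h1, H.orth, if_neg (by omega)]
    simp

lemma apply_mul (H : IsSymmetricOPS Λ P h) {n : ℕ} {R : ℝ[X]} (hR : R.degree < (n + 1 : ℕ)) :
    Λ (P n * R) = R.coeff n * h n := by
  have h2 : P n * R = P n * (R - C (R.coeff n) * P n) + R.coeff n • (P n * P n) := by
    rw [smul_eq_C_mul]; ring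
  rw [h2, map_add, map_smul, H.apply_mul_eq_zero (H.degree_sub_lt hR), H.orth]
  simp

lemma eq_zero_of_orth (H : IsSymmetricOPS Λ P h) {N : ℕ} {E : ℝ[X]} (hE : E.degree < N)
    (hz : ∀ j < N, Λ (P j * E) = 0) : E = 0 := by
  by_contra hne
  have hd : E.natDegree < N := (natDegree_lt_iff_degree_lt hne).2 hE
  have h1 := hz _ hd
  rw [H.apply_mul (degree_le_natDegree.trans_lt (by exact_mod_cast Nat.lt_succ_self _))] at h1
  rcases mul_eq_zero.1 h1 with h2 | h2
  · exact hne (leadingCoeff_eq_zero.1 h2)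
  · exact (H.pos _).ne' h2

lemma coeff_comp_neg_X (p : ℝ[X]) (m : ℕ) :
    (p.comp (-X)).coeff m = (-1) ^ m * p.coeff m := by
  have : (-X : ℝ[X]) = C (-1) * X := by simp
  rw [this, comp_C_mul_X_coeff, mul_comm]

lemma comp_neg_X (H : IsSymmetricOPS Λ P h) (n : ℕ) :
    (P n).comp (-X) = C ((-1) ^ n) * P n := by
  refine sub_eq_zero.1 (H.eq_zero_of_orth (N := n) ?_ ?_)
  · rw [degree_lt_iff_coeff_zero]
    intro m hm
    simp only [coeff_sub, coeff_comp_neg_X, coeff_C_mul]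
    rcases hm.eq_or_lt with rfl | hm
    · exact sub_self _
    · simp [H.coeff_of_lt hm]
  · intro j hj
    have h1 : Λ (P j * (P n).comp (-X)) = 0 := by
      rw [← H.even, mul_comp, comp_assoc]
      have : (-X : ℝ[X]).comp (-X) = X := by simp
      rw [this, comp_X, mul_comm]
      apply H.apply_mul_eq_zero
      rw [degree_lt_iff_coeff_zero]
      intro m hm
      simp [coeff_comp_neg_X, H.coeff_of_lt (show j < m by omega)]
    have h2 : P j * ((P n).comp (-X) - C ((-1) ^ n) * P n)
        = P j * (P n).comp (-X) - ((-1 : ℝ) ^ n) • (P j * P n) := by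
      rw [smul_eq_C_mul]; ring
    rw [h2, map_sub, map_smul, h1, H.orth, if_neg (by omega)]
    simp

lemma coeff_succ_self (H : IsSymmetricOPS Λ P h) (n : ℕ) : (P (n + 1)).coeff n = 0 := by
  have h1 := congrArg (fun p => coeff p n) (H.comp_neg_X (n + 1))
  simp only [coeff_comp_neg_X, coeff_C_mul, pow_succ] at h1
  have h2 : ((-1 : ℝ) ^ n) ≠ 0 := by simp
  have : (-1 : ℝ) ^ n * (2 * (P (n + 1)).coeff n) = 0 := by linarith
  rcases mul_eq_zero.1 this with h3 | h3
  · exact absurd h3 h2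
  · linarith

lemma apply_X_mul_mul_succ (H : IsSymmetricOPS Λ P h) (n : ℕ) :
    Λ (P (n + 1) * (X * P n)) = h (n + 1) := by
  rw [H.apply_mul]
  · simp [H.coeff_self]
  · rw [degree_lt_iff_coeff_zero]
    rintro (_ | m) hm
    · omega
    · simp [H.coeff_of_lt (show n < m by omega)]

lemma recurrence (H : IsSymmetricOPS Λ P h) (n : ℕ) :
    P (n + 2) = X * P (n + 1) - C (h (n + 1) / h n) * P n := by
  refine sub_eq_zero.1 (H.eq_zero_of_orth (N := n + 2) ?_ ?_)
  · rw [degree_lt_iff_coeff_zero]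
    rintro (_ | m) hm
    · omega
    · rcases hm.eq_or_lt with hm | hm
      · obtain rfl : m = n + 1 := by omega
        simp [H.coeff_self, H.coeff_of_lt (show n < n + 2 by omega)]
      · simp [H.coeff_of_lt (show n + 2 < m + 1 by omega), H.coeff_of_lt (show n + 1 < m by omega),
          H.coeff_of_lt (show n < m + 1 by omega)]
  · intro j hj
    have h2 : P j * (P (n + 2) - (X * P (n + 1) - C (h (n + 1) / h n) * P n))
        = P j * P (n + 2) - P (n + 1) * (X * P j) + (h (n + 1) / h n) • (P j * P n) := by
      rw [smul_eq_C_mul]; ring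
    rw [h2, map_add, map_sub, map_smul, H.orth, H.orth, if_neg (by omega)]
    rcases lt_trichotomy j n with hj' | rfl | hj'
    · rw [H.apply_mul_eq_zero, if_neg (by omega)]
      · simp
      · rw [degree_lt_iff_coeff_zero]
        rintro (_ | m) hm
        · omega
        · simp [H.coeff_of_lt (show j < m by omega)]
    · have := (H.pos j).ne'
      rw [H.apply_X_mul_mul_succ, if_pos rfl, smul_eq_mul, div_mul_cancel₀ _ this]
      ring
    · obtain rfl : j = n + 1 := by omega
      have h3 : Λ (P (n + 1) * (X * P (n + 1))) = 0 := by
        have h4 := H.even (P (n + 1) * (X * P (n + 1)))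
        have h5 : (P (n + 1) * (X * P (n + 1))).comp (-X) = -(P (n + 1) * (X * P (n + 1))) := by
          simp only [mul_comp, X_comp, H.comp_neg_X]
          rcases neg_one_pow_eq_or ℝ (n + 1) with h | h <;> simp [h]
        rw [h5, map_neg] at h4
        linarith
      rw [h3, if_neg (by omega)]
      simp

lemma X_mul (H : IsSymmetricOPS Λ P h) (n : ℕ) :
    X * P (n + 1) = P (n + 2) + C (h (n + 1) / h n) * P n := by
  rw [H.recurrence n]; ring

lemma eval_neg_one (H : IsSymmetricOPS Λ P h) (n : ℕ) :
    (P n).eval (-1) = (-1) ^ n * (P n).eval 1 := by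
  have := congrArg (eval 1) (H.comp_neg_X n)
  simpa [eval_comp] using this

lemma exists_mul_of_isRoot {E : ℝ[X]} (h1 : E.eval 1 = 0) (h2 : E.eval (-1) = 0) :
    ∃ Q : ℝ[X], E = (X ^ 2 - 1) * Q := by
  obtain ⟨E', rfl⟩ := dvd_iff_isRoot.2 h1
  have h3 : E'.IsRoot (-1) := by
    simp only [eval_mul, eval_sub, eval_X, eval_C] at h2
    rw [IsRoot]; linarith
  obtain ⟨Q, rfl⟩ := dvd_iff_isRoot.2 h3
  exact ⟨Q, by simp only [map_neg, map_one]; ring⟩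

lemma eval_one_ne_zero (H : IsSymmetricOPS Λ P h) (n : ℕ) : (P n).eval 1 ≠ 0 := by
  intro h1
  obtain ⟨R, hR⟩ := exists_mul_of_isRoot h1 (by rw [H.eval_neg_one, h1, mul_zero])
  have hdeg : R.degree < n := by
    have hR0 : R ≠ 0 := by rintro rfl; exact (H.monic n).ne_zero (by simpa using hR)
    have hm : (X ^ 2 - 1 : ℝ[X]).Monic := by
      simpa using monic_X_pow_sub_C (1 : ℝ) (two_ne_zero)
    have h3 := congrArg natDegree hR
    have h4 : (X ^ 2 - 1 : ℝ[X]).natDegree = 2 := by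
      simpa using natDegree_X_pow_sub_C (n := 2) (r := (1 : ℝ))
    rw [hm.natDegree_mul' hR0, H.natDegree_eq, h4] at h3
    rw [← natDegree_lt_iff_degree_lt hR0]
    omega
  have h0 := H.apply_mul_eq_zero hdeg
  have h2 := H.orth n n
  rw [if_pos rfl] at h2
  have h3 : 0 ≤ Λ (-(P n * R) - P n * P n) := by
    apply H.nonneg
    intro x hx
    rw [hR]
    have h5 : 0 ≤ 1 - x ^ 2 := by nlinarith [hx.1, hx.2]
    have : eval x (-((X ^ 2 - 1) * R * R) - (X ^ 2 - 1) * R * ((X ^ 2 - 1) * R))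
        = (1 - x ^ 2) * (x * R.eval x) ^ 2 := by simp; ring
    rw [this]
    positivity
  rw [map_sub, map_neg, h0, h2] at h3
  linarith [H.pos n]

/-- The recurrence coefficients form a chain sequence with parameters `P (n + 1) 1 / P n 1`. -/
lemma chain (H : IsSymmetricOPS Λ P h) (n : ℕ) :
    h (n + 1) / h n = ((P (n + 1)).eval 1 / (P n).eval 1) *
      (1 - (P (n + 2)).eval 1 / (P (n + 1)).eval 1) := by
  have h1 := congrArg (eval 1) (H.recurrence n)
  simp only [eval_sub, eval_mul, eval_X, eval_C, one_mul] at h1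
  have := H.eval_one_ne_zero n
  have := H.eval_one_ne_zero (n + 1)
  rw [h1]
  field_simp
  ring

lemma coeff_recurrence (H : IsSymmetricOPS Λ P h) (n : ℕ) :
    (P (n + 3)).coeff (n + 1) = (P (n + 2)).coeff n - h (n + 2) / h (n + 1) := by
  rw [H.recurrence (n + 1)]
  simp [H.coeff_self]

/-- First consequence of the Pearson equation: integrate `((1 - x²) P (n+2) P (n+1) w)'`. -/
lemma pearson_coeff (H : IsSymmetricOPS Λ P h) {Ψ : ℝ[X] →ₗ[ℝ] ℝ} {α : ℝ}
    (hΨ : ∀ R : ℝ[X],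
      Λ ((1 - X ^ 2) * derivative R - C (2 * (α + 1)) * (X * R)) + Ψ ((1 - X ^ 2) * R) = 0)
    (n : ℕ) :
    (n + 2 : ℝ) + 2 * (P (n + 2)).coeff n
      - (2 * (n + 2 : ℝ) + 1 + 2 * α) * (h (n + 2) / h (n + 1))
      + Ψ ((1 - X ^ 2) * (P (n + 2) * P (n + 1))) / h (n + 1) = 0 := by
  have hne := (H.pos (n + 1)).ne'
  have hne0 := (H.pos n).ne'
  have e1 : Λ (P (n + 1) * derivative (P (n + 2))) = (n + 2) * h (n + 1) := by
    rw [H.apply_mul]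
    · simp only [coeff_derivative, H.coeff_self]; push_cast; ring
    · rw [degree_lt_iff_coeff_zero]
      intro m hm
      simp [coeff_derivative, H.coeff_of_lt (show n + 2 < m + 1 by omega)]
  have e2 : Λ (P (n + 2) * (X * derivative (P (n + 2)))) = (n + 2) * h (n + 2) := by
    rw [H.apply_mul]
    · simp only [coeff_X_mul, coeff_derivative, H.coeff_self]; push_cast; ring
    · rw [degree_lt_iff_coeff_zero]
      rintro (_ | m) hm
      · omega
      · simp [coeff_derivative, H.coeff_of_lt (show n + 2 < m + 1 by omega)]
  have e3 : Λ (P n * (X * derivative (P (n + 2)))) = -2 * (P (n + 2)).coeff n * h n := by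
    have h1 : Λ (P n * (X * derivative (P (n + 2)) - C (n + 2 : ℝ) * P (n + 2)))
        = -2 * (P (n + 2)).coeff n * h n := by
      have hc : ∀ m, (X * derivative (P (n + 2)) - C (n + 2 : ℝ) * P (n + 2)).coeff m
          = (m - (n + 2 : ℝ)) * (P (n + 2)).coeff m := by
        rintro (_ | m)
        · simp; ring
        · rw [coeff_sub, coeff_X_mul, coeff_derivative, coeff_C_mul]; push_cast; ring
      rw [H.apply_mul, hc]
      · ring
      · rw [degree_lt_iff_coeff_zero]
        intro m hm
        rw [hc]
        rcases hm.eq_or_lt with rfl | hm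
        · rw [H.coeff_succ_self (n + 1), mul_zero]
        · rcases (Nat.succ_le_of_lt hm).eq_or_lt with rfl | hm
          · push_cast; ring
          · rw [H.coeff_of_lt (by omega), mul_zero]
    have h2 : P n * (X * derivative (P (n + 2)) - C (n + 2 : ℝ) * P (n + 2))
        = P n * (X * derivative (P (n + 2))) - (n + 2 : ℝ) • (P n * P (n + 2)) := by
      rw [smul_eq_C_mul]; ring
    rw [h2, map_sub, map_smul, H.orth, if_neg (by omega)] at h1
    simpa using h1
  have e4 : Λ (P (n + 2) * ((1 - X ^ 2) * derivative (P (n + 1)))) = -(n + 1) * h (n + 2) := by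
    rw [H.apply_mul]
    · rw [sub_mul, coeff_sub, one_mul, coeff_X_pow_mul, coeff_derivative, coeff_derivative,
        H.coeff_self, H.coeff_of_lt (by omega)]
      push_cast; ring
    · rw [degree_lt_iff_coeff_zero]
      intro m hm
      obtain ⟨m, rfl⟩ : ∃ l, m = l + 2 := ⟨m - 2, by omega⟩
      rw [sub_mul, coeff_sub, one_mul, coeff_X_pow_mul, coeff_derivative, coeff_derivative,
        H.coeff_of_lt (by omega), H.coeff_of_lt (by omega)]
      simp
  have e5 := H.apply_X_mul_mul_succ (n + 1)
  have key := hΨ (P (n + 2) * P (n + 1))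
  have hx := H.X_mul n
  have h6 : (1 - X ^ 2) * derivative (P (n + 2) * P (n + 1))
        - C (2 * (α + 1)) * (X * (P (n + 2) * P (n + 1)))
      = P (n + 1) * derivative (P (n + 2)) - P (n + 2) * (X * derivative (P (n + 2)))
        - (h (n + 1) / h n) • (P n * (X * derivative (P (n + 2))))
        + P (n + 2) * ((1 - X ^ 2) * derivative (P (n + 1)))
        - (2 * (α + 1)) • (P (n + 2) * (X * P (n + 1))) := by
    rw [derivative_mul, smul_eq_C_mul, smul_eq_C_mul]
    linear_combination (-X * derivative (P (n + 2))) * hx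
  rw [h6, map_sub, map_add, map_sub, map_sub, map_smul, map_smul, e1, e2, e3, e4, e5] at key
  simp only [smul_eq_mul] at key
  field_simp at key ⊢
  linear_combination key

/-- Second consequence of the Pearson equation: integrate `((1 - x²) P (n+1) Q w)'`, where
`(x² - 1) Q = P (n+2) - γ P n` is orthogonal for the weight `(1 - x²) w`. -/
lemma pearson_chain (H : IsSymmetricOPS Λ P h) {Ψ : ℝ[X] →ₗ[ℝ] ℝ} {α : ℝ}
    (hΨ : ∀ R : ℝ[X],
      Λ ((1 - X ^ 2) * derivative R - C (2 * (α + 1)) * (X * R)) + Ψ ((1 - X ^ 2) * R) = 0)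
    (n : ℕ) :
    ((n + 1 : ℝ) + Ψ (P (n + 1) * P n) / h n) * ((P (n + 2)).eval 1 / (P (n + 1)).eval 1)
      = (1 - (P (n + 2)).eval 1 / (P (n + 1)).eval 1)
        * ((n + 2 : ℝ) + 2 * α + Ψ (P (n + 2) * P (n + 1)) / h (n + 1)) := by
  have hne := (H.pos (n + 1)).ne'
  have hne0 := (H.pos n).ne'
  have hv0 := H.eval_one_ne_zero n
  have hv1 := H.eval_one_ne_zero (n + 1)
  set γ : ℝ := (P (n + 2)).eval 1 / (P n).eval 1 with hγ
  obtain ⟨Q, hQ⟩ : ∃ Q : ℝ[X], P (n + 2) - C γ * P n = (X ^ 2 - 1) * Q := by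
    apply exists_mul_of_isRoot
    · simp [hγ, hv0]
    · simp only [eval_sub, eval_mul, eval_C, H.eval_neg_one, hγ]
      field_simp
      ring
  have hcQ : ∀ m, (P (n + 2)).coeff (m + 2) - γ * (P n).coeff (m + 2)
      = Q.coeff m - Q.coeff (m + 2) := by
    intro m
    have := congrArg (fun p => coeff p (m + 2)) hQ
    simpa [sub_mul, coeff_X_pow_mul] using this
  have hQdeg : Q.natDegree ≤ n := by
    have hm : (X ^ 2 - 1 : ℝ[X]).Monic := by
      simpa using monic_X_pow_sub_C (1 : ℝ) (two_ne_zero)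
    have h4 : (X ^ 2 - 1 : ℝ[X]).natDegree = 2 := by
      simpa using natDegree_X_pow_sub_C (n := 2) (r := (1 : ℝ))
    by_cases hQ0 : Q = 0
    · simp [hQ0]
    have h3 := hm.natDegree_mul' hQ0
    rw [← hQ, h4] at h3
    have h5 : (P (n + 2) - C γ * P n).natDegree ≤ n + 2 := by
      refine (natDegree_sub_le _ _).trans (max_le (H.natDegree_eq _).le ?_)
      exact (natDegree_C_mul_le _ _).trans (by rw [H.natDegree_eq]; omega)
    omega
  have hQlt : ∀ m, n < m → Q.coeff m = 0 := fun m hm =>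
    coeff_eq_zero_of_natDegree_lt (by omega)
  have hQn : Q.coeff n = 1 := by
    have := hcQ n
    rw [H.coeff_self, H.coeff_of_lt (by omega), hQlt (n + 2) (by omega)] at this
    linarith
  have e1 : Λ (P n * derivative (P (n + 1))) = (n + 1) * h n := by
    rw [H.apply_mul]
    · simp [coeff_derivative, H.coeff_self]
    · rw [degree_lt_iff_coeff_zero]
      intro m hm
      simp [coeff_derivative, H.coeff_of_lt (show n + 1 < m + 1 by omega)]
  have e2 : Λ (P (n + 2) * derivative (P (n + 1))) = 0 := by
    rw [H.apply_mul_eq_zero]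
    rw [degree_lt_iff_coeff_zero]
    intro m hm
    simp [coeff_derivative, H.coeff_of_lt (show n + 1 < m + 1 by omega)]
  have hcoef : ∀ m, ((1 - X ^ 2) * derivative Q).coeff (m + 1)
      = Q.coeff (m + 2) * (m + 2) - Q.coeff m * m := by
    rintro (_ | m)
    · simp [sub_mul, coeff_derivative, coeff_X_pow_mul']; left; norm_num
    · rw [sub_mul, coeff_sub, one_mul, coeff_X_pow_mul, coeff_derivative, coeff_derivative]
      push_cast; ring
  have e4 : Λ (P (n + 1) * ((1 - X ^ 2) * derivative Q)) = -n * h (n + 1) := by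
    rw [H.apply_mul]
    · rw [hcoef, hQn, hQlt _ (by omega)]; ring
    · rw [degree_lt_iff_coeff_zero]
      intro m hm
      obtain ⟨m, rfl⟩ : ∃ l, m = l + 1 := ⟨m - 1, by omega⟩
      rw [hcoef, hQlt _ (by omega), hQlt _ (by omega)]; ring
  have e5 : Λ (P (n + 1) * (X * Q)) = h (n + 1) := by
    rw [H.apply_mul]
    · simp [hQn]
    · rw [degree_lt_iff_coeff_zero]
      rintro (_ | m) hm
      · omega
      · simp [hQlt m (by omega)]
  have key := hΨ (P (n + 1) * Q)
  have h6 : (1 - X ^ 2) * derivative (P (n + 1) * Q)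
        - C (2 * (α + 1)) * (X * (P (n + 1) * Q))
      = γ • (P n * derivative (P (n + 1))) - P (n + 2) * derivative (P (n + 1))
        + P (n + 1) * ((1 - X ^ 2) * derivative Q)
        - (2 * (α + 1)) • (P (n + 1) * (X * Q)) := by
    rw [derivative_mul, smul_eq_C_mul, smul_eq_C_mul]
    linear_combination (derivative (P (n + 1))) * hQ
  have h7 : (1 - X ^ 2) * (P (n + 1) * Q)
      = γ • (P (n + 1) * P n) - P (n + 2) * P (n + 1) := by
    rw [smul_eq_C_mul]
    linear_combination (P (n + 1)) * hQ
  rw [h6, h7, map_sub, map_add, map_sub, map_sub, map_smul, map_smul, map_smul,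
    e1, e2, e4, e5] at key
  simp only [smul_eq_mul] at key
  have hch := H.chain n
  have hγ' : γ = ((P (n + 1)).eval 1 / (P n).eval 1)
      * ((P (n + 2)).eval 1 / (P (n + 1)).eval 1) := by
    rw [hγ]; field_simp
  set g : ℝ := (P (n + 2)).eval 1 / (P (n + 1)).eval 1
  set g0 : ℝ := (P (n + 1)).eval 1 / (P n).eval 1
  have hg0 : g0 ≠ 0 := div_ne_zero hv1 hv0
  have hh : h (n + 1) = g0 * (1 - g) * h n := by rw [← hch]; field_simp
  have hU : Ψ (P (n + 1) * P n) = Ψ (P (n + 1) * P n) / h n * h n := by field_simp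
  have hV : Ψ (P (n + 2) * P (n + 1)) = Ψ (P (n + 2) * P (n + 1)) / h (n + 1) * h (n + 1) := by
    field_simp
  set U := Ψ (P (n + 1) * P n) / h n
  set V := Ψ (P (n + 2) * P (n + 1)) / h (n + 1)
  rw [hU, hV, hγ', hh] at key
  have hprod : g0 * h n ≠ 0 := mul_ne_zero hg0 hne0
  apply mul_left_cancel₀ hprod
  linear_combination key

/-- Matrix entries, in the orthonormal basis, of a functional dominated by `B * Λ`. -/
lemma abs_apply_mul_le (H : IsSymmetricOPS Λ P h) {Φ : ℝ[X] →ₗ[ℝ] ℝ} {B : ℝ}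
    (hΦ : ∀ p : ℝ[X], (∀ x ∈ Set.Icc (-1 : ℝ) 1, 0 ≤ p.eval x) → |Φ p| ≤ B * Λ p) (m n : ℕ) :
    |Φ (P m * P n) / (√(h m) * √(h n))| ≤ B := by
  have hm := H.pos m
  have hn := H.pos n
  have sm : 0 < √(h m) := Real.sqrt_pos.2 hm
  have sn : 0 < √(h n) := Real.sqrt_pos.2 hn
  set u := C (1 / √(h m)) * P m
  set v := C (1 / √(h n)) * P n
  have huv : Φ (P m * P n) / (√(h m) * √(h n)) = Φ (u * v) := by
    have : u * v = (1 / (√(h m) * √(h n))) • (P m * P n) := by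
      have : C (1 / (√(h m) * √(h n))) = C (1 / √(h m)) * C (1 / √(h n)) := by
        rw [← C_mul]; congr 1; field_simp
      rw [smul_eq_C_mul, this]; ring
    rw [this, map_smul, smul_eq_mul]; ring
  have hnorm : ∀ l, Λ ((C (1 / √(h l)) * P l) * (C (1 / √(h l)) * P l)) = 1 := by
    intro l
    have hl := H.pos l
    have : (C (1 / √(h l)) * P l) * (C (1 / √(h l)) * P l) = (1 / h l) • (P l * P l) := by
      have : C (1 / h l) = C (1 / √(h l)) * C (1 / √(h l)) := by
        rw [← C_mul]; congr 1; rw [div_mul_div_comm, Real.mul_self_sqrt hl.le, one_mul]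
      rw [smul_eq_C_mul, this]; ring
    rw [this, map_smul, H.orth, if_pos rfl, smul_eq_mul]; field_simp
  have hpar : Λ ((u + v) * (u + v)) + Λ ((u - v) * (u - v)) = 4 := by
    rw [← map_add]
    have : (u + v) * (u + v) + (u - v) * (u - v) = (2 : ℝ) • (u * u) + (2 : ℝ) • (v * v) := by
      rw [ofNat_smul_eq_nsmul ℝ 2, ofNat_smul_eq_nsmul ℝ 2, nsmul_eq_mul, nsmul_eq_mul]
      push_cast; ring
    rw [this, map_add, map_smul, map_smul, hnorm, hnorm]; norm_num
  have hpol : Φ (u * v) = (Φ ((u + v) * (u + v)) - Φ ((u - v) * (u - v))) / 4 := by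
    rw [← map_sub]
    have : (u + v) * (u + v) - (u - v) * (u - v) = (4 : ℝ) • (u * v) := by
      rw [ofNat_smul_eq_nsmul ℝ 4, nsmul_eq_mul]
      push_cast; ring
    rw [this, map_smul, smul_eq_mul]; ring
  have h1 := hΦ ((u + v) * (u + v)) (fun x _ => by rw [eval_mul]; exact mul_self_nonneg _)
  have h2 := hΦ ((u - v) * (u - v)) (fun x _ => by rw [eval_mul]; exact mul_self_nonneg _)
  rw [huv, hpol]
  rw [abs_le] at h1 h2 ⊢
  have h3 : B * Λ ((u + v) * (u + v)) + B * Λ ((u - v) * (u - v)) = 4 * B := by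
    rw [← mul_add, hpar]; ring
  constructor <;> linarith [h1.1, h1.2, h2.1, h2.2]

end IsSymmetricOPS
end OrthogonalPolynomials

section Sequences

open Filter Topology

/-- A bounded solution of a contracting three-term inequality is small far out. -/
lemma abs_le_of_contracting {e : ℕ → ℝ} {B κ ε : ℝ} {N : ℕ} (hκ0 : 0 ≤ κ) (hκ1 : κ < 1)
    (hε : 0 ≤ ε) (hB : ∀ m, |e m| ≤ B)
    (he : ∀ m ≥ N, |e (m + 1)| ≤ κ / 2 * (|e (m + 2)| + |e m|) + ε) (j : ℕ) :
    ∀ m ≥ N + j, |e m| ≤ κ ^ j * B + ε / (1 - κ) := by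
  have h1 : 0 < 1 - κ := by linarith
  have hfix : κ * (ε / (1 - κ)) + ε = ε / (1 - κ) := by field_simp; ring
  induction j with
  | zero =>
    intro m _
    have : 0 ≤ ε / (1 - κ) := by positivity
    simpa using (hB m).trans (by linarith)
  | succ j ih =>
    intro m hm
    obtain ⟨m, rfl⟩ : ∃ l, m = l + 1 := ⟨m - 1, by omega⟩
    have h2 := ih (m + 2) (by omega)
    have h3 := ih m (by omega)
    calc |e (m + 1)| ≤ κ / 2 * (|e (m + 2)| + |e m|) + ε := he m (by omega)
      _ ≤ κ / 2 * ((κ ^ j * B + ε / (1 - κ)) + (κ ^ j * B + ε / (1 - κ))) + ε := by gcongr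
      _ = κ ^ (j + 1) * B + (κ * (ε / (1 - κ)) + ε) := by ring
      _ = _ := by rw [hfix]

/-- If the increments of a convergent sequence are asymptotic to `c / n²`, its tail is
asymptotic to `-c / n`. -/
lemma tendsto_mul_sub_of_increments {t : ℕ → ℝ} {L c : ℝ} (ht : Tendsto t atTop (𝓝 L))
    (hd : Tendsto (fun n : ℕ => (n : ℝ) * (n + 1) * (t (n + 1) - t n)) atTop (𝓝 c)) :
    Tendsto (fun n : ℕ => (n : ℝ) * (t n - L)) atTop (𝓝 (-c)) := by
  have hinv : ∀ a : ℝ, Tendsto (fun n : ℕ => t n + a / n) atTop (𝓝 L) := fun a => by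
    simpa using ht.add (tendsto_const_div_atTop_nhds_zero_nat a)
  have hinc : ∀ n : ℕ, 1 ≤ n → ∀ a : ℝ,
      (n : ℝ) * (n + 1) * ((t (n + 1) + a / (n + 1 : ℕ)) - (t n + a / n))
        = n * (n + 1) * (t (n + 1) - t n) - a := by
    intro n hn a
    have : (n : ℝ) ≠ 0 := by positivity
    push_cast
    field_simp
    ring
  rw [Metric.tendsto_atTop] at hd ⊢
  intro ε hε
  obtain ⟨N, hN⟩ := hd (ε / 2) (by positivity)
  refine ⟨max N 1, fun n hn => ?_⟩
  have hn1 : 1 ≤ n := le_of_max_le_right hn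
  have hnN : N ≤ n := le_of_max_le_left hn
  have hn0 : (0 : ℝ) < n := by exact_mod_cast hn1
  have hlow : L ≤ t n + (c + ε / 2) / n := by
    have anti : Antitone (fun j : ℕ => t (n + j) + (c + ε / 2) / (n + j : ℕ)) := by
      refine antitone_nat_of_succ_le fun j => ?_
      have h1 := hinc (n + j) (by omega) (c + ε / 2)
      have h2 := hN (n + j) (by omega)
      rw [Real.dist_eq, abs_lt] at h2
      have hpos : (0 : ℝ) < (n + j : ℕ) * ((n + j : ℕ) + 1) := by positivity
      have h3 : ((n + j : ℕ) : ℝ) * ((n + j : ℕ) + 1) * ((t (n + j + 1)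
        + (c + ε / 2) / (n + j + 1 : ℕ)) - (t (n + j) + (c + ε / 2) / (n + j : ℕ))) ≤ 0 := by
        rw [h1]; linarith [h2.2]
      have h4 := nonpos_of_mul_nonpos_right h3 hpos
      exact sub_nonpos.1 h4
    have lim : Tendsto (fun j : ℕ => t (n + j) + (c + ε / 2) / (n + j : ℕ)) atTop (𝓝 L) :=
      (hinv _).comp (tendsto_atTop_mono (fun j => Nat.le_add_left j n) tendsto_id)
    simpa using anti.le_of_tendsto lim 0
  have hupp : t n + (c - ε / 2) / n ≤ L := by
    have mono : Monotone (fun j : ℕ => t (n + j) + (c - ε / 2) / (n + j : ℕ)) := by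
      refine monotone_nat_of_le_succ fun j => ?_
      have h1 := hinc (n + j) (by omega) (c - ε / 2)
      have h2 := hN (n + j) (by omega)
      rw [Real.dist_eq, abs_lt] at h2
      have hpos : (0 : ℝ) < (n + j : ℕ) * ((n + j : ℕ) + 1) := by positivity
      have h3 : 0 ≤ ((n + j : ℕ) : ℝ) * ((n + j : ℕ) + 1) * ((t (n + j + 1)
        + (c - ε / 2) / (n + j + 1 : ℕ)) - (t (n + j) + (c - ε / 2) / (n + j : ℕ))) := by
        rw [h1]; linarith [h2.1]
      have h4 := nonneg_of_mul_nonneg_right h3 hpos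
      exact sub_nonneg.1 h4
    have lim : Tendsto (fun j : ℕ => t (n + j) + (c - ε / 2) / (n + j : ℕ)) atTop (𝓝 L) :=
      (hinv _).comp (tendsto_atTop_mono (fun j => Nat.le_add_left j n) tendsto_id)
    simpa using mono.ge_of_tendsto lim 0
  have h5 : n * L ≤ n * t n + (c + ε / 2) := by
    have := mul_le_mul_of_nonneg_left hlow hn0.le
    rwa [mul_add, mul_div_cancel₀ _ hn0.ne'] at this
  have h6 : n * t n + (c - ε / 2) ≤ n * L := by
    have := mul_le_mul_of_nonneg_left hupp hn0.le
    rwa [mul_add, mul_div_cancel₀ _ hn0.ne'] at this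
  rw [Real.dist_eq, abs_lt]
  constructor <;> nlinarith

lemma tendsto_denominator_div {α C : ℝ} {M : ℕ → ℝ} (hM : ∀ m, |M m| ≤ C) :
    Tendsto (fun m : ℕ => (2 * (m : ℝ) + 3 + 2 * α + M m + M (m + 1)) / (m : ℝ)) atTop (𝓝 2) := by
  have h1 : Tendsto (fun m : ℕ => (3 + 2 * α + M m + M (m + 1)) / (m : ℝ)) atTop (𝓝 0) := by
    refine squeeze_zero_norm (a := fun m : ℕ => (|3 + 2 * α| + C + C) / (m : ℝ)) (fun m => ?_)
      (tendsto_const_div_atTop_nhds_zero_nat _)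
    rw [norm_div, Real.norm_eq_abs, Real.norm_natCast]
    gcongr
    exact (abs_add_le _ _).trans (add_le_add ((abs_add_le _ _).trans
      (add_le_add le_rfl (hM m))) (hM (m + 1)))
  have h2 := (tendsto_const_nhds (x := (2 : ℝ))).add h1
  rw [add_zero] at h2
  refine h2.congr' ?_
  filter_upwards [eventually_ge_atTop 1] with m hm
  have : (m : ℝ) ≠ 0 := by positivity
  field_simp
  ring

lemma mul_eq_div_of_chain {α : ℝ} {v M : ℕ → ℝ} {C : ℝ} (hM : ∀ m, |M m| ≤ C)
    (hv : ∀ m : ℕ, v (m + 1) * (2 * (m : ℝ) + 3 + 2 * α + M m + M (m + 1))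
      = 1 + 2 * α + M (m + 1) - M m) :
    ∀ᶠ m : ℕ in atTop, (m : ℝ) * v (m + 1) = (1 + 2 * α + M (m + 1) - M m)
      / ((2 * (m : ℝ) + 3 + 2 * α + M m + M (m + 1)) / (m : ℝ)) := by
  have h1 := (tendsto_denominator_div (α := α) hM).eventually_ne two_ne_zero
  filter_upwards [h1] with m hm
  rw [eq_div_iff hm, ← hv m]
  have : (m : ℝ) ≠ 0 := by rintro h; simp [h] at hm
  field_simp

lemma tendsto_zero_of_chain {α : ℝ} {v M : ℕ → ℝ} {C : ℝ} (hM : ∀ m, |M m| ≤ C)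
    (hv : ∀ m : ℕ, v (m + 1) * (2 * (m : ℝ) + 3 + 2 * α + M m + M (m + 1))
      = 1 + 2 * α + M (m + 1) - M m) : Tendsto v atTop (𝓝 0) := by
  rw [← tendsto_add_atTop_iff_nat 1]
  have h1 : Tendsto (fun m : ℕ => (1 + 2 * α + M (m + 1) - M m) / (m : ℝ)) atTop (𝓝 0) := by
    refine squeeze_zero_norm (a := fun m : ℕ => (|1 + 2 * α| + C + C) / (m : ℝ)) (fun m => ?_)
      (tendsto_const_div_atTop_nhds_zero_nat _)
    rw [norm_div, Real.norm_eq_abs, Real.norm_natCast]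
    gcongr
    exact (abs_sub _ _).trans (add_le_add ((abs_add_le _ _).trans
      (add_le_add le_rfl (hM (m + 1)))) (hM m))
  have h2 := h1.div (tendsto_denominator_div (α := α) hM) two_ne_zero
  rw [zero_div] at h2
  refine h2.congr' ?_
  filter_upwards [mul_eq_div_of_chain hM hv, eventually_ge_atTop 1] with m hm hm1
  have : (m : ℝ) ≠ 0 := by positivity
  simp only [Pi.div_apply]
  rw [div_right_comm, ← hm]
  field_simp

lemma tendsto_mul_of_chain {α μ : ℝ} {v M : ℕ → ℝ} {C : ℝ} (hM : ∀ m, |M m| ≤ C)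
    (hv : ∀ m : ℕ, v (m + 1) * (2 * (m : ℝ) + 3 + 2 * α + M m + M (m + 1))
      = 1 + 2 * α + M (m + 1) - M m) (hμ : Tendsto M atTop (𝓝 μ)) :
    Tendsto (fun m : ℕ => (m : ℝ) * v (m + 1)) atTop (𝓝 ((1 + 2 * α) / 2)) := by
  have h1 : Tendsto (fun m : ℕ => 1 + 2 * α + M (m + 1) - M m) atTop (𝓝 (1 + 2 * α)) := by
    have := ((tendsto_const_nhds (x := 1 + 2 * α)).add ((tendsto_add_atTop_iff_nat 1).2 hμ)).sub hμ
    simpa using this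
  refine (h1.div (tendsto_denominator_div (α := α) hM) two_ne_zero).congr' ?_
  filter_upwards [mul_eq_div_of_chain hM hv] with m hm
  exact hm.symm

/-- Asymptotics of the subleading coefficients `c` from the two Pearson relations. -/
lemma asymptotics_of_relations {α β θ μ C : ℝ} {v M b c : ℕ → ℝ} (hM : ∀ m, |M m| ≤ C)
    (hv : ∀ m : ℕ, v (m + 1) * (2 * (m : ℝ) + 3 + 2 * α + M m + M (m + 1))
      = 1 + 2 * α + M (m + 1) - M m) (hμ : Tendsto M atTop (𝓝 μ))
    (hb : ∀ m, b m = (1 + v m) * (1 - v (m + 1)) / 4)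
    (hc : ∀ m, c (m + 1) = c m - b (m + 1))
    (hG : ∀ m : ℕ, ((m : ℝ) + 2) + 2 * c m - (2 * ((m : ℝ) + 2) + 1 + 2 * α) * b (m + 1)
      + (-2 * β * b (m + 1) + θ * M (m + 1)) = 0) :
    Tendsto (fun m : ℕ => c m + ((m : ℝ) + 2) / 4) atTop
      (𝓝 ((1 + 2 * α) / 8 + β / 4 - θ * μ / 2)) ∧
    Tendsto (fun m : ℕ => ((m : ℝ) + 2) *
      (c m + ((m : ℝ) + 2) / 4 - ((1 + 2 * α) / 8 + β / 4 - θ * μ / 2))) atTop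
      (𝓝 ((1 - 4 * α ^ 2) / 16)) := by
  set A := (1 + 2 * α) / 2 with hA
  have v0 := tendsto_zero_of_chain hM hv
  have v1 : Tendsto (fun m => v (m + 1)) atTop (𝓝 0) := (tendsto_add_atTop_iff_nat 1).2 v0
  have v2 : Tendsto (fun m => v (m + 2)) atTop (𝓝 0) := (tendsto_add_atTop_iff_nat 2).2 v0
  have nv1 : Tendsto (fun m : ℕ => (m : ℝ) * v (m + 1)) atTop (𝓝 A) :=
    tendsto_mul_of_chain hM hv hμ
  have nv2 : Tendsto (fun m : ℕ => ((m : ℝ) + 1) * v (m + 2)) atTop (𝓝 A) := by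
    have := (tendsto_add_atTop_iff_nat 1).2 nv1
    simpa using this
  have M1 := (tendsto_add_atTop_iff_nat 1).2 hμ
  have hs : Tendsto (fun m : ℕ => c m + ((m : ℝ) + 2) / 4) atTop
      (𝓝 ((1 + 2 * α) / 8 + β / 4 - θ * μ / 2)) := by
    have hlim := ((((nv1.sub nv2).sub (nv1.mul v2)).const_mul (1 / 4)).add
      (((v2.const_mul (1 / 4))).add ((((v1.sub v2).sub (v1.mul v2)).const_mul
        ((5 + 2 * α + 2 * β) / 8)).sub (M1.const_mul (θ / 2))))).add_const
        ((1 + 2 * α) / 8 + β / 4)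
    convert hlim using 2 with m
    · have h1 := hG m
      rw [hb (m + 1)] at h1
      linear_combination (1 / 2) * h1
    · ring
  refine ⟨hs, ?_⟩
  set b₀ := (1 + 2 * α) / 8 + β / 4 - θ * μ / 2
  have ht : Tendsto (fun m : ℕ => c m + ((m : ℝ) + 2) / 4 - v (m + 1) / 4) atTop (𝓝 b₀) := by
    simpa using hs.sub (v1.div_const 4)
  have hd : Tendsto (fun m : ℕ => (m : ℝ) * (m + 1) *
      ((c (m + 1) + (((m + 1 : ℕ) : ℝ) + 2) / 4 - v (m + 1 + 1) / 4)
        - (c m + ((m : ℝ) + 2) / 4 - v (m + 1) / 4))) atTop (𝓝 (A * A / 4)) := by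
    refine ((nv1.mul nv2).div_const 4).congr fun m => ?_
    rw [hc, hb (m + 1)]
    push_cast
    ring
  have h1 := tendsto_mul_sub_of_increments ht hd
  have h2 := (h1.add (nv1.div_const 4)).add ((hs.sub_const b₀).const_mul 2)
  convert h2 using 2 with m
  · ring
  · rw [hA]; ring

end Sequences

section Resolvent

open Polynomial Filter Topology

namespace IsSymmetricOPS

variable {Λ : ℝ[X] →ₗ[ℝ] ℝ} {P : ℕ → ℝ[X]} {h : ℕ → ℝ}

lemma sqrt_pos (H : IsSymmetricOPS Λ P h) (n : ℕ) : 0 < √(h n) := Real.sqrt_pos.2 (H.pos n)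

lemma div_eq_sq (H : IsSymmetricOPS Λ P h) (n : ℕ) :
    h (n + 1) / h n = (√(h (n + 1)) / √(h n)) ^ 2 := by
  rw [div_pow, Real.sq_sqrt (H.pos _).le, Real.sq_sqrt (H.pos _).le]

lemma abs_resolvent_le {Φ : ℝ[X] →ₗ[ℝ] ℝ} {κ : ℝ} (hκ0 : 0 ≤ κ) (hκ1 : κ < 1)
    (hres : ∀ p, Φ ((1 - C κ * X) * p) = Λ p)
    (hnn : ∀ p : ℝ[X], (∀ x ∈ Set.Icc (-1 : ℝ) 1, 0 ≤ p.eval x) → 0 ≤ Φ p) (p : ℝ[X])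
    (hp : ∀ x ∈ Set.Icc (-1 : ℝ) 1, 0 ≤ p.eval x) : |Φ p| ≤ 1 / (1 - κ) * Λ p := by
  have h1 : 0 < 1 - κ := by linarith
  rw [abs_of_nonneg (hnn p hp), one_div_mul_eq_div, le_div_iff₀ h1]
  have h2 : 0 ≤ Φ ((1 - C κ * X) * p - (1 - κ) • p) := by
    apply hnn
    intro x hx
    have : eval x ((1 - C κ * X) * p - (1 - κ) • p) = κ * (1 - x) * eval x p := by
      simp; ring
    rw [this]
    have := hp x hx
    have : 0 ≤ 1 - x := by linarith [hx.2]
    positivity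
  rw [map_sub, map_smul, hres, smul_eq_mul] at h2
  linarith

lemma sqrt_div_sqrt_le_one (H : IsSymmetricOPS Λ P h) (n : ℕ) : √(h (n + 1)) / √(h n) ≤ 1 := by
  have h1 := H.abs_apply_mul_le (Φ := Λ ∘ₗ LinearMap.mulLeft ℝ X) (B := 1) (fun p hp => by
    rw [abs_le]
    simp only [LinearMap.comp_apply, LinearMap.mulLeft_apply, one_mul]
    constructor
    · have : 0 ≤ Λ (X * p + p) := H.nonneg _ fun x hx => by
        have h1 := hp x hx
        have h2 : 0 ≤ x + 1 := by linarith [hx.1]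
        have : eval x (X * p + p) = (x + 1) * eval x p := by simp; ring
        rw [this]; positivity
      rw [map_add] at this; linarith
    · have : 0 ≤ Λ (p - X * p) := H.nonneg _ fun x hx => by
        have h1 := hp x hx
        have h2 : 0 ≤ 1 - x := by linarith [hx.2]
        have : eval x (p - X * p) = (1 - x) * eval x p := by simp; ring
        rw [this]; positivity
      rw [map_sub] at this; linarith) (n + 1) n
  have h2 : X * (P (n + 1) * P n) = P (n + 1) * (X * P n) := by ring
  rw [LinearMap.comp_apply, LinearMap.mulLeft_apply, h2, H.apply_X_mul_mul_succ] at h1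
  have h3 : h (n + 1) / (√(h (n + 1)) * √(h n)) = √(h (n + 1)) / √(h n) := by
    have := H.sqrt_pos (n + 1)
    have := H.sqrt_pos n
    nth_rewrite 1 [← Real.mul_self_sqrt (H.pos (n + 1)).le]
    field_simp
  rw [h3] at h1
  exact (le_abs_self _).trans h1

lemma resolvent_recurrence (H : IsSymmetricOPS Λ P h) {Φ : ℝ[X] →ₗ[ℝ] ℝ} {κ : ℝ}
    (hres : ∀ p, Φ ((1 - C κ * X) * p) = Λ p) (n m : ℕ) :
    Φ (P n * P (m + 1)) / (√(h n) * √(h (m + 1))) = (if n = m + 1 then 1 else 0) +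
      κ * (√(h (m + 2)) / √(h (m + 1)) * (Φ (P n * P (m + 2)) / (√(h n) * √(h (m + 2))))
        + √(h (m + 1)) / √(h m) * (Φ (P n * P m) / (√(h n) * √(h m)))) := by
  have h1 := hres (P n * P (m + 1))
  have h2 : (1 - C κ * X) * (P n * P (m + 1)) = P n * P (m + 1)
      - κ • (P n * P (m + 2) + (h (m + 1) / h m) • (P n * P m)) := by
    rw [smul_eq_C_mul, smul_eq_C_mul]
    linear_combination (-C κ * P n) * H.X_mul m
  rw [h2, map_sub, map_smul, map_add, map_smul, H.orth, H.div_eq_sq] at h1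
  simp only [smul_eq_mul] at h1
  have s0 := H.sqrt_pos n
  have s1 := H.sqrt_pos m
  have s2 := H.sqrt_pos (m + 1)
  have s3 := H.sqrt_pos (m + 2)
  have h3 : (if n = m + 1 then h (m + 1) else 0)
      = (if n = m + 1 then 1 else 0) * (√(h n) * √(h (m + 1))) := by
    split_ifs with hn
    · rw [hn, Real.mul_self_sqrt (H.pos _).le, one_mul]
    · rw [zero_mul]
  rw [h3] at h1
  rw [eq_add_of_sub_eq h1]
  field_simp

/-- The resolvent of a Jacobi matrix with off-diagonal entries tending to `1 / 2` is
asymptotically that of the free Jacobi matrix. -/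
lemma tendsto_resolvent (H : IsSymmetricOPS Λ P h) {Φ : ℝ[X] →ₗ[ℝ] ℝ} {κ q c : ℝ} (hκ0 : 0 ≤ κ)
    (hκ1 : κ < 1) (hres : ∀ p, Φ ((1 - C κ * X) * p) = Λ p)
    (hnn : ∀ p : ℝ[X], (∀ x ∈ Set.Icc (-1 : ℝ) 1, 0 ≤ p.eval x) → 0 ≤ Φ p)
    (ha : Tendsto (fun m => √(h (m + 1)) / √(h m)) atTop (𝓝 (1 / 2)))
    (hq0 : 0 ≤ q) (hq1 : q ≤ 1) (hq : κ * (1 + q ^ 2) = 2 * q) (hc : c * (1 - κ * q) = 1) :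
    Tendsto (fun m => Φ (P (m + 1) * P m) / (√(h (m + 1)) * √(h m))) atTop (𝓝 (c * q)) := by
  set ρ : ℕ → ℕ → ℝ := fun n m => Φ (P n * P m) / (√(h n) * √(h m))
  set a : ℕ → ℝ := fun m => √(h (m + 1)) / √(h m)
  have hB : ∀ n m, |ρ n m| ≤ 1 / (1 - κ) := fun n m =>
    H.abs_apply_mul_le (abs_resolvent_le hκ0 hκ1 hres hnn) n m
  have hgap : 0 < 1 - κ := by linarith
  -- the free resolvent
  set y : ℤ → ℝ := fun d => c * q ^ d.natAbs with hy
  have hyrec : ∀ d : ℤ, y d = (if d = 0 then 1 else 0) + κ / 2 * (y (d + 1) + y (d - 1)) := by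
    intro d
    rcases lt_trichotomy d 0 with hd | rfl | hd
    · obtain ⟨j, rfl⟩ : ∃ j : ℕ, d = -(j + 1 : ℤ) := ⟨(-d - 1).toNat, by omega⟩
      have e1 : (-(j + 1 : ℤ)).natAbs = j + 1 := by omega
      have e2 : (-(j + 1 : ℤ) + 1).natAbs = j := by omega
      have e3 : (-(j + 1 : ℤ) - 1).natAbs = j + 2 := by omega
      simp only [hy, e1, e2, e3, if_neg hd.ne]
      linear_combination (-c * q ^ j / 2) * hq
    · simp only [hy]
      norm_num
      linear_combination hc
    · obtain ⟨j, rfl⟩ : ∃ j : ℕ, d = (j + 1 : ℤ) := ⟨(d - 1).toNat, by omega⟩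
      have e1 : ((j + 1 : ℤ)).natAbs = j + 1 := by omega
      have e2 : ((j + 1 : ℤ) + 1).natAbs = j + 2 := by omega
      have e3 : ((j + 1 : ℤ) - 1).natAbs = j := by omega
      simp only [hy, e1, e2, e3, if_neg hd.ne']
      linear_combination (-c * q ^ j / 2) * hq
  have hyB : ∀ d, |y d| ≤ |c| := by
    intro d
    rw [hy, abs_mul, abs_of_nonneg (pow_nonneg hq0 _)]
    exact mul_le_of_le_one_right (abs_nonneg _) (pow_le_one₀ hq0 hq1)
  set e : ℕ → ℕ → ℝ := fun n m => ρ n m - y (n - m : ℤ) with he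
  have heB : ∀ n m, |e n m| ≤ 1 / (1 - κ) + |c| := fun n m =>
    (abs_sub _ _).trans (add_le_add (hB n m) (hyB _))
  have herec : ∀ n m, e n (m + 1) = κ / 2 * (e n (m + 2) + e n m)
      + κ * ((a (m + 1) - 1 / 2) * ρ n (m + 2) + (a m - 1 / 2) * ρ n m) := by
    intro n m
    have h1 : ρ n (m + 1) = (if n = m + 1 then 1 else 0)
        + κ * (a (m + 1) * ρ n (m + 2) + a m * ρ n m) := H.resolvent_recurrence hres n m
    have h2 := hyrec (n - (m + 1 : ℕ))
    have h3 : ((n : ℤ) - (m + 1 : ℕ) = 0) ↔ n = m + 1 := by omega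
    have h4 : (n : ℤ) - (m + 1 : ℕ) + 1 = n - m := by push_cast; ring
    have h5 : (n : ℤ) - (m + 1 : ℕ) - 1 = n - (m + 2 : ℕ) := by push_cast; ring
    simp only [h3, h4, h5] at h2
    simp only [he]
    rw [h1, h2]
    ring
  rw [Metric.tendsto_atTop] at ha ⊢
  intro η hη
  obtain ⟨j, hj⟩ : ∃ j : ℕ, κ ^ j * (1 / (1 - κ) + |c|) < η / 2 := by
    have h1 : Tendsto (fun j : ℕ => κ ^ j * (1 / (1 - κ) + |c|)) atTop (𝓝 0) := by
      simpa using (tendsto_pow_atTop_nhds_zero_of_lt_one hκ0 hκ1).mul_const (1 / (1 - κ) + |c|)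
    exact (h1.eventually (gt_mem_nhds (half_pos hη))).exists
  obtain ⟨N, hN⟩ := ha (η / 4 * (1 - κ) * (1 - κ)) (by positivity)
  refine ⟨N + j, fun m hm => ?_⟩
  have hsmall : ∀ l ≥ N, |e (m + 1) (l + 1)|
      ≤ κ / 2 * (|e (m + 1) (l + 2)| + |e (m + 1) l|) + η / 2 * (1 - κ) := by
    intro l hl
    have hterm : ∀ i ≥ N, ∀ r, |(a i - 1 / 2) * ρ (m + 1) r| ≤ η / 4 * (1 - κ) := by
      intro i hi r
      have h1 := (hN i hi).le
      rw [Real.dist_eq] at h1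
      rw [abs_mul]
      calc |a i - 1 / 2| * |ρ (m + 1) r|
          ≤ (η / 4 * (1 - κ) * (1 - κ)) * (1 / (1 - κ)) :=
            mul_le_mul h1 (hB _ _) (abs_nonneg _) (by positivity)
        _ = η / 4 * (1 - κ) := by field_simp
    have h1 := hterm (l + 1) (by omega) (l + 2)
    have h2 := hterm l hl l
    rw [herec]
    refine (abs_add_le _ _).trans (add_le_add ?_ ?_)
    · rw [abs_mul, abs_of_nonneg (by positivity : (0 : ℝ) ≤ κ / 2)]
      gcongr
      exact abs_add_le _ _
    · rw [abs_mul, abs_of_nonneg hκ0]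
      have h3 := (abs_add_le ((a (l + 1) - 1 / 2) * ρ (m + 1) (l + 2))
        ((a l - 1 / 2) * ρ (m + 1) l)).trans (add_le_add h1 h2)
      calc _ ≤ 1 * (η / 4 * (1 - κ) + η / 4 * (1 - κ)) :=
            mul_le_mul hκ1.le h3 (abs_nonneg _) zero_le_one
        _ = η / 2 * (1 - κ) := by ring
  have hfin := abs_le_of_contracting hκ0 hκ1 (by positivity) (heB (m + 1)) hsmall j m hm
  have hval : e (m + 1) m = ρ (m + 1) m - c * q := by
    simp only [he, hy]
    have : ((m + 1 : ℕ) - m : ℤ).natAbs = 1 := by omega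
    rw [this, pow_one]
  rw [hval, mul_div_cancel_right₀ _ hgap.ne'] at hfin
  rw [Real.dist_eq]
  exact hfin.trans_lt (by linarith)

/-- Asymptotics of the subleading coefficient for an even Pearson functional whose logarithmic
derivative is a combination of `x / (1 - x²)` and `x / (1 - κ² x²)`. -/
theorem tendsto_coeff (H : IsSymmetricOPS Λ P h) {Φ Ψ : ℝ[X] →ₗ[ℝ] ℝ} {α β κ : ℝ}
    (hκ0 : 0 < κ) (hκ1 : κ < 1) (hres : ∀ p, Φ ((1 - C κ * X) * p) = Λ p)
    (hnn : ∀ p : ℝ[X], (∀ x ∈ Set.Icc (-1 : ℝ) 1, 0 ≤ p.eval x) → 0 ≤ Φ p)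
    (hΨ : ∀ R : ℝ[X],
      Λ ((1 - X ^ 2) * derivative R - C (2 * (α + 1)) * (X * R)) + Ψ ((1 - X ^ 2) * R) = 0)
    (hΨodd : ∀ p : ℝ[X], p.comp (-X) = -p → Ψ p = -2 * β * κ * Φ p)
    (hΨres : ∀ p, Ψ ((1 - C (κ ^ 2) * X ^ 2) * p) = -2 * β * κ ^ 2 * Λ (X * p)) :
    Tendsto (fun m : ℕ => (P (m + 2)).coeff m + ((m : ℝ) + 2) / 4) atTop
      (𝓝 ((α - β) / 4 + 1 / 8 + β * (1 - √(1 - κ ^ 2)) / (2 * κ ^ 2))) ∧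
    Tendsto (fun m : ℕ => ((m : ℝ) + 2) * ((P (m + 2)).coeff m + ((m : ℝ) + 2) / 4
      - ((α - β) / 4 + 1 / 8 + β * (1 - √(1 - κ ^ 2)) / (2 * κ ^ 2)))) atTop
      (𝓝 ((1 - 4 * α ^ 2) / 16)) := by
  have hgap : 0 < 1 - κ := by linarith
  set a : ℕ → ℝ := fun m => √(h (m + 1)) / √(h m) with ha
  set ρ : ℕ → ℝ := fun m => Φ (P (m + 1) * P m) / (√(h (m + 1)) * √(h m)) with hρ
  set M : ℕ → ℝ := fun m => Ψ (P (m + 1) * P m) / h m with hMdef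
  set v : ℕ → ℝ := fun m => 2 * ((P (m + 1)).eval 1 / (P m).eval 1) - 1 with hvdef
  have ha0 : ∀ m, 0 ≤ a m := fun m => (div_pos (H.sqrt_pos _) (H.sqrt_pos _)).le
  have hMρ : ∀ m, M m = -2 * β * κ * (a m * ρ m) := by
    intro m
    have hodd : (P (m + 1) * P m).comp (-X) = -(P (m + 1) * P m) := by
      rw [mul_comp, H.comp_neg_X, H.comp_neg_X, pow_succ]
      rcases neg_one_pow_eq_or ℝ m with h | h <;> simp [h]
    have s1 := H.sqrt_pos m
    have s2 := H.sqrt_pos (m + 1)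
    simp only [hMdef, ha, hρ]
    rw [hΨodd _ hodd, ← Real.sq_sqrt (H.pos m).le]
    rw [Real.sqrt_sq s1.le]
    field_simp
  have hρB : ∀ m, |ρ m| ≤ 1 / (1 - κ) := fun m =>
    H.abs_apply_mul_le (abs_resolvent_le hκ0.le hκ1 hres hnn) _ _
  have hMB : ∀ m, |M m| ≤ |-2 * β * κ| * (1 * (1 / (1 - κ))) := by
    intro m
    rw [hMρ, abs_mul, abs_mul (a m), abs_of_nonneg (ha0 m)]
    gcongr
    · exact H.sqrt_div_sqrt_le_one m
    · exact hρB m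
  have hv : ∀ m : ℕ, v (m + 1) * (2 * (m : ℝ) + 3 + 2 * α + M m + M (m + 1))
      = 1 + 2 * α + M (m + 1) - M m := by
    intro m
    have h1 := H.pearson_chain hΨ m
    simp only [hvdef, hMdef]
    linear_combination 2 * h1
  have hb : ∀ m, h (m + 1) / h m = (1 + v m) * (1 - v (m + 1)) / 4 := by
    intro m
    rw [H.chain m]
    simp only [hvdef]
    ring
  have v0 := tendsto_zero_of_chain hMB hv
  have hblim : Tendsto (fun m => h (m + 1) / h m) atTop (𝓝 (1 / 4)) := by
    have h1 := (((v0.const_add 1).mul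
      (((tendsto_add_atTop_iff_nat 1).2 v0).const_sub 1)).div_const 4)
    simp only [add_zero, sub_zero, mul_one] at h1
    exact h1.congr fun m => (hb m).symm
  have halim : Tendsto a atTop (𝓝 (1 / 2)) := by
    have h1 := (Real.continuous_sqrt.tendsto (1 / 4)).comp hblim
    have h2 : √(1 / 4 : ℝ) = 1 / 2 := by
      rw [show (1 / 4 : ℝ) = (1 / 2) ^ 2 by norm_num, Real.sqrt_sq (by norm_num)]
    rw [h2] at h1
    refine h1.congr fun m => ?_
    simp only [Function.comp_apply, ha]
    rw [Real.sqrt_div (H.pos _).le]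
  set s := √(1 - κ ^ 2)
  have hs1 : 0 < 1 - κ ^ 2 := by nlinarith
  have hspos : 0 < s := Real.sqrt_pos.2 hs1
  have hsq : s ^ 2 = 1 - κ ^ 2 := Real.sq_sqrt hs1.le
  have hsle : s ≤ 1 := by nlinarith
  have hsge : 1 - s ≤ κ := by nlinarith
  have hρlim : Tendsto ρ atTop (𝓝 (1 / s * ((1 - s) / κ))) := by
    refine H.tendsto_resolvent hκ0.le hκ1 hres hnn halim (div_nonneg (by linarith) hκ0.le)
      ((div_le_one hκ0).2 hsge) ?_ ?_
    · field_simp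
      linear_combination hsq
    · field_simp
      ring
  have hMlim : Tendsto M atTop (𝓝 (-2 * β * κ * (1 / 2 * (1 / s * ((1 - s) / κ))))) :=
    ((halim.mul hρlim).const_mul (-2 * β * κ)).congr fun m => (hMρ m).symm
  have hG : ∀ m : ℕ, ((m : ℝ) + 2) + 2 * (P (m + 2)).coeff m
      - (2 * ((m : ℝ) + 2) + 1 + 2 * α) * (h (m + 1 + 1) / h (m + 1))
      + (-2 * β * (h (m + 1 + 1) / h (m + 1)) + (-(1 - κ ^ 2) / κ ^ 2) * M (m + 1)) = 0 := by
    intro m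
    have h1 := H.pearson_coeff hΨ m
    have h2 := hΨres (P (m + 2) * P (m + 1))
    have h3 : (1 - C (κ ^ 2) * X ^ 2) * (P (m + 2) * P (m + 1))
        = κ ^ 2 • ((1 - X ^ 2) * (P (m + 2) * P (m + 1)))
          + (1 - κ ^ 2) • (P (m + 2) * P (m + 1)) := by
      rw [smul_eq_C_mul, smul_eq_C_mul, C_sub, C_1]
      ring
    have h4 : X * (P (m + 2) * P (m + 1)) = P (m + 2) * (X * P (m + 1)) := by ring
    rw [h3, map_add, map_smul, map_smul, h4, H.apply_X_mul_mul_succ (m + 1)] at h2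
    simp only [smul_eq_mul] at h2
    have hne := (H.pos (m + 1)).ne'
    simp only [hMdef]
    have h5 : Ψ ((1 - X ^ 2) * (P (m + 2) * P (m + 1)))
        = -2 * β * h (m + 1 + 1)
          + (-(1 - κ ^ 2) / κ ^ 2) * Ψ (P (m + 2) * P (m + 1)) := by
      field_simp
      linear_combination h2
    rw [h5] at h1
    rw [← h1]
    field_simp
  have hfin := asymptotics_of_relations (b := fun m => h (m + 1) / h m)
    (c := fun m => (P (m + 2)).coeff m) hMB hv hMlim hb (fun m => H.coeff_recurrence m) hG
  have hconst : (1 + 2 * α) / 8 + β / 4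
      - (-(1 - κ ^ 2) / κ ^ 2) * (-2 * β * κ * (1 / 2 * (1 / s * ((1 - s) / κ)))) / 2
      = (α - β) / 4 + 1 / 8 + β * (1 - s) / (2 * κ ^ 2) := by
    rw [← hsq]
    field_simp
    linear_combination (32 * β) * hsq
  rw [hconst] at hfin
  exact hfin

end IsSymmetricOPS
end Resolvent

section Integration

open Polynomial Set

/-- Integration of polynomials against an integrable weight on `[-1, 1]`. -/
noncomputable def polyIntegral (v : ℝ → ℝ) (hv : IntervalIntegrable v volume (-1) 1) :
    ℝ[X] →ₗ[ℝ] ℝ where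
  toFun p := ∫ x in (-1 : ℝ)..1, p.eval x * v x
  map_add' p q := by
    simp only [eval_add, add_mul]
    exact intervalIntegral.integral_add (hv.continuousOn_mul p.continuous.continuousOn)
      (hv.continuousOn_mul q.continuous.continuousOn)
  map_smul' c p := by
    simp only [eval_smul, smul_eq_mul, mul_assoc, intervalIntegral.integral_const_mul,
      RingHom.id_apply]

variable {v : ℝ → ℝ}

lemma polyIntegral_apply (hv : IntervalIntegrable v volume (-1) 1) (p : ℝ[X]) :
    polyIntegral v hv p = ∫ x in (-1 : ℝ)..1, p.eval x * v x := rfl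

lemma intervalIntegrable_eval_mul (hv : IntervalIntegrable v volume (-1) 1) (p : ℝ[X]) :
    IntervalIntegrable (fun x => p.eval x * v x) volume (-1) 1 :=
  hv.continuousOn_mul p.continuous.continuousOn

lemma polyIntegral_nonneg (hv : IntervalIntegrable v volume (-1) 1)
    (h0 : ∀ x ∈ Icc (-1 : ℝ) 1, 0 ≤ v x) (p : ℝ[X])
    (hp : ∀ x ∈ Icc (-1 : ℝ) 1, 0 ≤ p.eval x) : 0 ≤ polyIntegral v hv p :=
  intervalIntegral.integral_nonneg (by norm_num) fun x hx => mul_nonneg (hp x hx) (h0 x hx)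

lemma polyIntegral_comp_neg (hv : IntervalIntegrable v volume (-1) 1) (p : ℝ[X]) :
    polyIntegral v hv (p.comp (-X)) = ∫ x in (-1 : ℝ)..1, p.eval x * v (-x) := by
  have := intervalIntegral.integral_comp_neg (a := (-1 : ℝ)) (b := 1)
    (fun x => p.eval x * v (-x))
  rw [neg_neg] at this
  rw [← this, polyIntegral_apply]
  simp [eval_comp]

/-- Integrating the derivative of `(1 - x²) w(x) R(x)` over `[-1, 1]`. -/
lemma integral_pearson {α β k2 : ℝ} (hα : -1 < α) (hk0 : 0 < k2) (hk1 : k2 < 1) {w : ℝ → ℝ}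
    (hw : ∀ x : ℝ, w x = (1 - x ^ 2) ^ α * (1 - k2 * x ^ 2) ^ β)
    (hwi : IntervalIntegrable w volume (-1) 1)
    (hψ : IntervalIntegrable (fun x => -2 * β * k2 * x / (1 - k2 * x ^ 2) * w x) volume (-1) 1)
    (R : ℝ[X]) :
    polyIntegral w hwi ((1 - X ^ 2) * derivative R - C (2 * (α + 1)) * (X * R))
      + polyIntegral _ hψ ((1 - X ^ 2) * R) = 0 := by
  have hden : ∀ x ∈ Icc (-1 : ℝ) 1, 0 < 1 - k2 * x ^ 2 := by
    intro x hx
    have : x ^ 2 ≤ 1 := by nlinarith [hx.1, hx.2]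
    nlinarith
  rw [polyIntegral_apply, polyIntegral_apply, ← intervalIntegral.integral_add
    (intervalIntegrable_eval_mul hwi _) (intervalIntegrable_eval_mul hψ _)]
  set F : ℝ → ℝ := fun x => (1 - x ^ 2) ^ (α + 1) * (1 - k2 * x ^ 2) ^ β * R.eval x with hF
  have hcont : ContinuousOn F (Icc (-1) 1) := by
    refine ContinuousOn.mul (ContinuousOn.mul ?_ ?_) R.continuous.continuousOn
    · exact ContinuousOn.rpow_const (by fun_prop) fun x _ => Or.inr (by linarith)
    · exact ContinuousOn.rpow_const (by fun_prop) fun x hx => Or.inl (hden x hx).ne'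
  have hderiv : ∀ x ∈ Ioo (-1 : ℝ) 1, HasDerivAt F
      (eval x ((1 - X ^ 2) * derivative R - C (2 * (α + 1)) * (X * R)) * w x
        + eval x ((1 - X ^ 2) * R) * (-2 * β * k2 * x / (1 - k2 * x ^ 2) * w x)) x := by
    intro x hx
    have h1 : 0 < 1 - x ^ 2 := by nlinarith [hx.1, hx.2]
    have h2 := hden x (Ioo_subset_Icc_self hx)
    have d1 : HasDerivAt (fun y : ℝ => 1 - y ^ 2) (-(2 * x)) x := by
      simpa using (hasDerivAt_pow 2 x).const_sub 1
    have d2 : HasDerivAt (fun y : ℝ => 1 - k2 * y ^ 2) (-(k2 * (2 * x))) x := by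
      simpa using ((hasDerivAt_pow 2 x).const_mul k2).const_sub 1
    have d3 := ((d1.rpow_const (p := α + 1) (Or.inl h1.ne')).mul
      (d2.rpow_const (p := β) (Or.inl h2.ne'))).mul (R.hasDerivAt x)
    refine d3.congr_deriv ?_
    simp only [eval_sub, eval_mul, eval_one, eval_pow, eval_X, eval_C, Pi.mul_apply, hw,
      add_sub_cancel_right, Real.rpow_add_one h1.ne', Real.rpow_sub_one h2.ne']
    field_simp
    ring
  rw [intervalIntegral.integral_eq_sub_of_hasDerivAt_of_le (by norm_num) hcont hderiv
    ((intervalIntegrable_eval_mul hwi _).add (intervalIntegrable_eval_mul hψ _))]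
  have h0 : (0 : ℝ) ^ (α + 1) = 0 := Real.zero_rpow (by linarith)
  simp [hF, h0]

end Integration

/-- Large `n` asymptotics of the sub-leading coefficient:
with `b₀ = (α−β)/4 + 1/8 + β(1−√(1−k²))/(2k²)` and `b₁ = (1−4α²)/16`, one has
`p1(n) + n/4 → b₀` and `n(p1(n) + n/4 − b₀) → b₁`. -/
theorem stmt_19
    (α β k2 : ℝ) (hα : -1 < α) (hk2 : k2 ∈ Set.Ioo (0:ℝ) 1)
    (w : ℝ → ℝ)
    (hw : ∀ x : ℝ, w x = (1 - x ^ 2) ^ α * (1 - k2 * x ^ 2) ^ β)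
    (P : ℕ → Polynomial ℝ)
    (hPmonic : ∀ n, (P n).Monic)
    (hPdeg : ∀ n, (P n).natDegree = n)
    (h : ℕ → ℝ) (hpos : ∀ n, 0 < h n)
    (horth : ∀ m n : ℕ,
      (∫ x in (-1:ℝ)..1, (P m).eval x * (P n).eval x * w x)
        = if m = n then h n else 0)
    (p1 : ℕ → ℝ) (hp10 : p1 0 = 0) (hp11 : p1 1 = 0)
    (hp1 : ∀ n : ℕ, 2 ≤ n → p1 n = (P n).coeff (n - 2)) :
    Filter.Tendsto (fun n : ℕ => p1 n + (n:ℝ) / 4) Filter.atTop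
      (nhds ((α - β) / 4 + 1/8 + β * (1 - Real.sqrt (1 - k2)) / (2 * k2))) ∧
    Filter.Tendsto
      (fun n : ℕ => (n:ℝ) * (p1 n + (n:ℝ) / 4
        - ((α - β) / 4 + 1/8 + β * (1 - Real.sqrt (1 - k2)) / (2 * k2))))
      Filter.atTop (nhds ((1 - 4 * α ^ 2) / 16)) := by
  obtain ⟨hk0, hk1⟩ := hk2
  set κ := √k2
  have hκ0 : 0 < κ := Real.sqrt_pos.2 hk0
  have hκsq : κ ^ 2 = k2 := Real.sq_sqrt hk0.le
  have hκ1 : κ < 1 := by nlinarith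
  have hIcc : Set.uIcc (-1 : ℝ) 1 = Set.Icc (-1) 1 := Set.uIcc_of_le (by norm_num)
  have hminus : ∀ x ∈ Set.Icc (-1 : ℝ) 1, 0 < 1 - κ * x := fun x hx => by nlinarith [hx.1, hx.2]
  have hplus : ∀ x ∈ Set.Icc (-1 : ℝ) 1, 0 < 1 + κ * x := fun x hx => by nlinarith [hx.1, hx.2]
  have hprod : ∀ x, 1 - k2 * x ^ 2 = (1 - κ * x) * (1 + κ * x) := fun x => by
    rw [← hκsq]; ring
  have hden : ∀ x ∈ Set.Icc (-1 : ℝ) 1, 0 < 1 - k2 * x ^ 2 := fun x hx => by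
    rw [hprod]; exact mul_pos (hminus x hx) (hplus x hx)
  have hwi : IntervalIntegrable w volume (-1) 1 := by
    by_contra hcon
    have hP0 : P 0 = 1 := (hPmonic 0).natDegree_eq_zero.1 (hPdeg 0)
    have h1 := horth 0 0
    simp only [hP0, Polynomial.eval_one, one_mul, if_true] at h1
    rw [intervalIntegral.integral_undef hcon] at h1
    exact (hpos 0).ne h1
  have hw0 : ∀ x ∈ Set.Icc (-1 : ℝ) 1, 0 ≤ w x := fun x hx => by
    rw [hw]
    exact mul_nonneg (Real.rpow_nonneg (by nlinarith [hx.1, hx.2]) _)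
      (Real.rpow_nonneg (hden x hx).le _)
  have hweven : ∀ x, w (-x) = w x := fun x => by rw [hw, hw, neg_sq]
  have hφ : IntervalIntegrable (fun x => (1 - κ * x)⁻¹ * w x) volume (-1) 1 := by
    refine hwi.continuousOn_mul (ContinuousOn.inv₀ (by fun_prop) fun x hx => ?_)
    rw [hIcc] at hx
    exact (hminus x hx).ne'
  have hφ' : IntervalIntegrable (fun x => (1 + κ * x)⁻¹ * w x) volume (-1) 1 := by
    refine hwi.continuousOn_mul (ContinuousOn.inv₀ (by fun_prop) fun x hx => ?_)
    rw [hIcc] at hx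
    exact (hplus x hx).ne'
  have hψ : IntervalIntegrable (fun x => -2 * β * k2 * x / (1 - k2 * x ^ 2) * w x)
      volume (-1) 1 := by
    refine hwi.continuousOn_mul (ContinuousOn.div (by fun_prop) (by fun_prop) fun x hx => ?_)
    rw [hIcc] at hx
    exact (hden x hx).ne'
  have H : IsSymmetricOPS (polyIntegral w hwi) P h :=
    { monic := hPmonic
      natDegree_eq := hPdeg
      pos := hpos
      orth := fun m n => by
        rw [← horth m n, polyIntegral_apply]
        simp only [Polynomial.eval_mul]
      even := fun p => by
        rw [polyIntegral_comp_neg, polyIntegral_apply]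
        simp only [hweven]
      nonneg := polyIntegral_nonneg hwi hw0 }
  have main := H.tendsto_coeff (Φ := polyIntegral _ hφ) (Ψ := polyIntegral _ hψ) (α := α) (β := β)
    hκ0 hκ1
    (fun p => by
      rw [polyIntegral_apply, polyIntegral_apply]
      refine intervalIntegral.integral_congr fun x hx => ?_
      rw [hIcc] at hx
      have := (hminus x hx).ne'
      simp only [Polynomial.eval_mul, Polynomial.eval_sub, Polynomial.eval_one,
        Polynomial.eval_C, Polynomial.eval_X]
      field_simp)
    (polyIntegral_nonneg hφ fun x hx =>
      mul_nonneg (inv_nonneg.2 (hminus x hx).le) (hw0 x hx))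
    (integral_pearson hα hk0 hk1 hw hwi hψ)
    (fun p hp => by
      have h1 := polyIntegral_comp_neg hφ p
      rw [hp, map_neg] at h1
      simp only [hweven, mul_neg, sub_neg_eq_add] at h1
      have h2 : polyIntegral _ hψ p = β * κ * ((∫ x in (-1 : ℝ)..1,
          p.eval x * ((1 + κ * x)⁻¹ * w x)) - polyIntegral _ hφ p) := by
        rw [polyIntegral_apply, polyIntegral_apply, ← intervalIntegral.integral_sub
          (intervalIntegrable_eval_mul hφ' p) (intervalIntegrable_eval_mul hφ p),
          ← intervalIntegral.integral_const_mul]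
        refine intervalIntegral.integral_congr fun x hx => ?_
        rw [hIcc] at hx
        have := (hminus x hx).ne'
        have := (hplus x hx).ne'
        simp only [hprod]
        rw [← hκsq]
        field_simp
        ring
      rw [h2, ← h1]
      ring)
    (fun p => by
      rw [polyIntegral_apply, polyIntegral_apply, ← intervalIntegral.integral_const_mul]
      refine intervalIntegral.integral_congr fun x hx => ?_
      rw [hIcc] at hx
      have := (hden x hx).ne'
      simp only [Polynomial.eval_mul, Polynomial.eval_sub, Polynomial.eval_one,
        Polynomial.eval_C, Polynomial.eval_X, Polynomial.eval_pow, hκsq]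
      field_simp)
  rw [hκsq] at main
  have hp2 : ∀ m : ℕ, p1 (m + 2) = (P (m + 2)).coeff m := fun m => hp1 (m + 2) (by omega)
  constructor
  · rw [← Filter.tendsto_add_atTop_iff_nat 2]
    simpa only [hp2, Nat.cast_add, Nat.cast_ofNat] using main.1
  · rw [← Filter.tendsto_add_atTop_iff_nat 2]
    simpa only [hp2, Nat.cast_add, Nat.cast_ofNat] using main.2
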